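/- For any graph function α, the maximum height is zero: y_max = max_v y_v = 0; equivalently, min_v r*_v = 0. -/

import Mathlib

open Filter Topology

variable {V : Type*}

/-- Maximum weight of an edge leaving `v` (as a supremum over the finite edge set). -/
noncomputable def outMax (E : V → V → Prop) (α : V → V → ℝ) (v : V) : ℝ :=
  sSup {x : ℝ | ∃ w, E v w ∧ x = α v w}

/-- Maximum weight of an edge entering `v`. -/
noncomputable def inMax (E : V → V → Prop) (α : V → V → ℝ) (v : V) : ℝ :=
  sSup {x : ℝ | ∃ u, E u v ∧ x = α u v}

/-- A graph function is balanced if the max outgoing weight equals the max incoming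
weight at every vertex. -/
def IsBalancedGF (E : V → V → Prop) (α : V → V → ℝ) : Prop :=
  ∀ v, outMax E α v = inMax E α v

/-- Raising imbalance at `v`. -/
noncomputable def rhoR (E : V → V → Prop) (α : V → V → ℝ) (v : V) : ℝ :=
  max 0 (outMax E α v - inMax E α v)

/-- Lowering imbalance at `v`. -/
noncomputable def rhoL (E : V → V → Prop) (α : V → V → ℝ) (v : V) : ℝ :=
  max 0 (inMax E α v - outMax E α v)

/-- A balancing operation at `v`: add `(α_v^out − α_v^in)/2` to every edge entering `v`
and subtract the same quantity from every edge leaving `v` (a self-loop is unchanged). -/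
noncomputable def balanceAt [DecidableEq V] (E : V → V → Prop) (α : V → V → ℝ) (v : V) :
    V → V → ℝ :=
  fun a b =>
    α a b + (if b = v then (outMax E α v - inMax E α v) / 2 else 0)
          - (if a = v then (outMax E α v - inMax E α v) / 2 else 0)

/-- A raising operation at `v`: balance at `v` if the raising imbalance is positive,
otherwise do nothing. -/
noncomputable def raiseOp [DecidableEq V] (E : V → V → Prop) (α : V → V → ℝ) (v : V) :
    V → V → ℝ :=
  if 0 < rhoR E α v then balanceAt E α v else α

/-- A lowering operation at `v`: balance at `v` if the lowering imbalance is positive,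
otherwise do nothing. -/
noncomputable def lowerOp [DecidableEq V] (E : V → V → Prop) (α : V → V → ℝ) (v : V) :
    V → V → ℝ :=
  if 0 < rhoL E α v then balanceAt E α v else α

/-- A sequence of vertices is fair if every vertex appears infinitely often. -/
def Fair (σ : ℕ → V) : Prop := ∀ (v : V) (N : ℕ), ∃ t, N ≤ t ∧ σ t = v

/-- State after `t` raising operations along the sequence `σ`. -/
noncomputable def raiseIter [DecidableEq V] (E : V → V → Prop) (α : V → V → ℝ)
    (σ : ℕ → V) : ℕ → V → V → ℝ
  | 0 => α
  | t + 1 => raiseOp E (raiseIter E α σ t) (σ t)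

/-- State after `t` lowering operations along the sequence `σ`. -/
noncomputable def lowerIter [DecidableEq V] (E : V → V → Prop) (α : V → V → ℝ)
    (σ : ℕ → V) : ℕ → V → V → ℝ
  | 0 => α
  | t + 1 => lowerOp E (lowerIter E α σ t) (σ t)

/-- The raising vector: cumulative amount by which each vertex has been raised after
`t` raising operations along `σ`. -/
noncomputable def rvec [DecidableEq V] (E : V → V → Prop) (α : V → V → ℝ)
    (σ : ℕ → V) : ℕ → V → ℝ
  | 0 => fun _ => 0
  | t + 1 => fun u =>
      rvec E α σ t u + (if u = σ t then rhoR E (raiseIter E α σ t) (σ t) / 2 else 0)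

/-- State after performing raising operations along a finite list of vertices. -/
noncomputable def raiseList [DecidableEq V] (E : V → V → Prop) :
    (V → V → ℝ) → List V → V → V → ℝ
  | α, [] => α
  | α, v :: l => raiseList E (raiseOp E α v) l

/-- Raising vector accumulated along a finite list of raising operations. -/
noncomputable def rvecList [DecidableEq V] (E : V → V → Prop) :
    (V → V → ℝ) → List V → V → ℝ
  | _, [] => fun _ => 0
  | α, v :: l => fun u =>
      (if u = v then rhoR E α v / 2 else 0) + rvecList E (raiseOp E α v) l u

/-- State after performing (unconditional) balancing operations along a list. -/
noncomputable def balList [DecidableEq V] (E : V → V → Prop) :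
    (V → V → ℝ) → List V → V → V → ℝ
  | α, [] => α
  | α, v :: l => balList E (balanceAt E α v) l

/-- State after `t` balancing operations along the sequence `σ`. -/
noncomputable def balIter [DecidableEq V] (E : V → V → Prop) (α : V → V → ℝ)
    (σ : ℕ → V) : ℕ → V → V → ℝ
  | 0 => α
  | t + 1 => balanceAt E (balIter E α σ t) (σ t)

/-- Two graph functions are equivalent if their sums around every directed cycle agree. -/
def Equivalent (E : V → V → Prop) (α γ : V → V → ℝ) : Prop :=
  ∀ (k : ℕ) (f : ZMod (k + 1) → V), (∀ i, E (f i) (f (i + 1))) →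
    (∑ i, α (f i) (f (i + 1))) = ∑ i, γ (f i) (f (i + 1))

/-- The raising-balanced graph function determined by the limiting raising vector. -/
noncomputable def alphaR (α : V → V → ℝ) (rstar : V → ℝ) : V → V → ℝ :=
  fun u v => α u v + rstar v - rstar u

/-- Height of a vertex: `y_v = -r*_v`. -/
noncomputable def height (rstar : V → ℝ) (v : V) : ℝ := -rstar v

/-- Level of a vertex: maximum over incoming edges of `α^R`. -/
noncomputable def level (E : V → V → Prop) (α : V → V → ℝ) (rstar : V → ℝ) (v : V) : ℝ :=
  inMax E (alphaR α rstar) v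

/-- Momentum of a vertex: `m_v = max over edges (u,v) entering v of (α_{uv} − x_v)`. -/
noncomputable def momentum (E : V → V → Prop) (α : V → V → ℝ) (rstar : V → ℝ) (v : V) : ℝ :=
  sSup {c : ℝ | ∃ u, E u v ∧ c = α u v - level E α rstar v}

/-!
The limit `r*` is the least nonnegative vector `s` such that raising each vertex `v` by `s v` makes
`α` raising-balanced. It is such a vector because a raising operation at `v` raises `v` by half its
imbalance, and along a fair sequence these amounts tend to `0`. It is the least one because a
raising operation at `v` never lifts the raising vector above such an `s`, with which it can at most
catch up at `v`. Raising all vertices by the same amount changes no edge weight, so for every lower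
bound `c` of `r*` the vector `r* - c` is again of this kind; hence `r* ≤ r* - c`, that is, `c ≤ 0`.
-/

/-- A graph function is raising-balanced if its raising imbalance vanishes at every vertex. -/
def IsRaisingBalanced (E : V → V → Prop) (α : V → V → ℝ) : Prop :=
  ∀ v, rhoR E α v = 0

section Imbalance

variable {E : V → V → Prop} {α β : V → V → ℝ} {v : V} {c : ℝ}

lemma outMax_eq_sup' (hfin : {w | E v w}.Finite) (hne : hfin.toFinset.Nonempty) :
    outMax E α v = hfin.toFinset.sup' hne (α v) := by
  rw [Finset.sup'_eq_csSup_image, hfin.coe_toFinset, outMax]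
  simp only [Set.image, Set.mem_ofPred_eq, eq_comm]

lemma inMax_eq_outMax_flip : inMax E α v = outMax (flip E) (flip α) v :=
  rfl

lemma outMax_le_outMax_add (hne : ∃ w, E v w) (hfin : {w | E v w}.Finite)
    (h : ∀ w, E v w → α v w ≤ β v w + c) : outMax E α v ≤ outMax E β v + c := by
  have hne' : hfin.toFinset.Nonempty := hfin.toFinset_nonempty.2 hne
  rw [outMax_eq_sup' hfin hne', outMax_eq_sup' hfin hne']
  refine Finset.sup'_le _ _ fun w hw => (h w (hfin.mem_toFinset.1 hw)).trans ?_
  gcongr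
  exact Finset.le_sup' (β v) hw

lemma inMax_le_inMax_add (hne : ∃ u, E u v) (hfin : {u | E u v}.Finite)
    (h : ∀ u, E u v → α u v ≤ β u v + c) : inMax E α v ≤ inMax E β v + c := by
  simp only [inMax_eq_outMax_flip]
  exact outMax_le_outMax_add hne hfin h

lemma rhoR_nonneg : 0 ≤ rhoR E α v :=
  le_max_left _ _

lemma rhoR_eq_zero_iff : rhoR E α v = 0 ↔ outMax E α v ≤ inMax E α v := by
  rw [rhoR, max_eq_left_iff, sub_nonpos]

section Limit

variable {ι : Type*} {l : Filter ι} {A : ι → V → V → ℝ}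

lemma tendsto_outMax (hne : ∃ w, E v w) (hfin : {w | E v w}.Finite)
    (h : ∀ w, Tendsto (fun i => A i v w) l (𝓝 (α v w))) :
    Tendsto (fun i => outMax E (A i) v) l (𝓝 (outMax E α v)) := by
  have hne' : hfin.toFinset.Nonempty := hfin.toFinset_nonempty.2 hne
  simp only [outMax_eq_sup' hfin hne']
  exact Tendsto.finset_sup'_nhds_apply hne' fun w _ => h w

lemma tendsto_inMax (hne : ∃ u, E u v) (hfin : {u | E u v}.Finite)
    (h : ∀ u, Tendsto (fun i => A i u v) l (𝓝 (α u v))) :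
    Tendsto (fun i => inMax E (A i) v) l (𝓝 (inMax E α v)) := by
  simp only [inMax_eq_outMax_flip]
  exact tendsto_outMax hne hfin h

lemma tendsto_rhoR (hout : ∃ w, E v w) (hin : ∃ u, E u v)
    (hout_fin : {w | E v w}.Finite) (hin_fin : {u | E u v}.Finite)
    (h : ∀ a b, Tendsto (fun i => A i a b) l (𝓝 (α a b))) :
    Tendsto (fun i => rhoR E (A i) v) l (𝓝 (rhoR E α v)) :=
  tendsto_const_nhds.max <|
    (tendsto_outMax hout hout_fin (h v)).sub (tendsto_inMax hin hin_fin fun u => h u v)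

end Limit

end Imbalance

section Potential

variable {E : V → V → Prop} {α : V → V → ℝ} {r s : V → ℝ} {v : V}

lemma alphaR_zero : alphaR α 0 = α := by
  funext a b
  simp [alphaR]

lemma alphaR_alphaR : alphaR (alphaR α r) s = alphaR α (r + s) := by
  funext a b
  simp only [alphaR, Pi.add_apply]
  ring

lemma alphaR_sub_const (c : ℝ) : alphaR α (fun v => s v - c) = alphaR α s := by
  funext a b
  simp only [alphaR]
  ring

lemma tendsto_alphaR {ι : Type*} {l : Filter ι} {R : ι → V → ℝ}
    (h : ∀ v, Tendsto (fun i => R i v) l (𝓝 (r v))) (a b : V) :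
    Tendsto (fun i => alphaR α (R i) a b) l (𝓝 (alphaR α r a b)) :=
  (tendsto_const_nhds.add (h b)).sub (h a)

lemma add_rhoR_alphaR_div_two_le (hout : ∃ w, E v w) (hin : ∃ u, E u v)
    (hout_fin : {w | E v w}.Finite) (hin_fin : {u | E u v}.Finite)
    (hs : rhoR E (alphaR α s) v = 0) (hrs : r ≤ s) :
    r v + rhoR E (alphaR α r) v / 2 ≤ s v := by
  have h_out : outMax E (alphaR α r) v ≤ outMax E (alphaR α s) v + (s v - r v) := by
    refine outMax_le_outMax_add hout hout_fin fun w _ => ?_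
    simp only [alphaR]
    linarith [hrs w]
  have h_in : inMax E (alphaR α s) v ≤ inMax E (alphaR α r) v + (s v - r v) := by
    refine inMax_le_inMax_add hin hin_fin fun u _ => ?_
    simp only [alphaR]
    linarith [hrs u]
  have h_rho : rhoR E (alphaR α r) v ≤ 2 * (s v - r v) :=
    max_le (by linarith [hrs v]) (by linarith [rhoR_eq_zero_iff.1 hs])
  linarith

end Potential

section Raising

variable [DecidableEq V] {E : V → V → Prop} {α : V → V → ℝ} {σ : ℕ → V}

lemma raiseOp_eq_alphaR (v : V) :
    raiseOp E α v = alphaR α (Pi.single v (rhoR E α v / 2)) := by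
  by_cases h : 0 < rhoR E α v
  · have h_rho : rhoR E α v = outMax E α v - inMax E α v :=
      max_eq_right ((lt_max_iff.1 h).resolve_left (lt_irrefl 0)).le
    funext a b
    rw [raiseOp, if_pos h, h_rho]
    simp only [balanceAt, alphaR, Pi.single_apply]
  · have h_rho : rhoR E α v = 0 := le_antisymm (not_lt.1 h) rhoR_nonneg
    rw [raiseOp, if_neg h, h_rho, zero_div, Pi.single_zero, alphaR_zero]

lemma rvec_succ (t : ℕ) :
    rvec E α σ (t + 1) =
      rvec E α σ t + Pi.single (σ t) (rhoR E (raiseIter E α σ t) (σ t) / 2) := by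
  funext u
  simp only [rvec, Pi.add_apply, Pi.single_apply]

lemma raiseIter_eq_alphaR (t : ℕ) : raiseIter E α σ t = alphaR α (rvec E α σ t) := by
  induction t with
  | zero => exact alphaR_zero.symm
  | succ t ih => rw [rvec_succ, ← alphaR_alphaR, ← ih, ← raiseOp_eq_alphaR, raiseIter]

lemma rvec_nonneg (t : ℕ) : 0 ≤ rvec E α σ t := by
  induction t with
  | zero => exact le_rfl
  | succ t ih =>
    rw [rvec_succ]
    exact add_nonneg ih (Pi.single_nonneg.2 (div_nonneg rhoR_nonneg zero_le_two))

section LocallyFinite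

variable (hout : ∀ v, ∃ w, E v w) (hin : ∀ v, ∃ u, E u v)
  (hout_fin : ∀ v, {w | E v w}.Finite) (hin_fin : ∀ v, {u | E u v}.Finite)

include hout hin hout_fin hin_fin

lemma rvec_le_of_isRaisingBalanced {s : V → ℝ} (hs_nonneg : 0 ≤ s)
    (hs : IsRaisingBalanced E (alphaR α s)) (t : ℕ) : rvec E α σ t ≤ s := by
  induction t with
  | zero => exact hs_nonneg
  | succ t ih =>
    intro v
    rw [rvec_succ, raiseIter_eq_alphaR, Pi.add_apply]
    rcases eq_or_ne v (σ t) with rfl | hv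
    · rw [Pi.single_eq_same]
      exact add_rhoR_alphaR_div_two_le (hout _) (hin _) (hout_fin _) (hin_fin _) (hs _) ih
    · rw [Pi.single_eq_of_ne hv, add_zero]
      exact ih v

variable {rstar : V → ℝ} (hσ : Fair σ)
  (hlim : ∀ v, Tendsto (fun t => rvec E α σ t v) atTop (𝓝 (rstar v)))

include hσ hlim

lemma isRaisingBalanced_alphaR_of_tendsto_rvec : IsRaisingBalanced E (alphaR α rstar) := by
  intro v
  have h_rho : Tendsto (fun t => rhoR E (raiseIter E α σ t) v) atTop
      (𝓝 (rhoR E (alphaR α rstar) v)) := by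
    simp only [raiseIter_eq_alphaR]
    exact tendsto_rhoR (hout v) (hin v) (hout_fin v) (hin_fin v) (tendsto_alphaR hlim)
  have h_step : Tendsto (fun t => 2 * (rvec E α σ (t + 1) v - rvec E α σ t v)) atTop (𝓝 0) := by
    simpa using (((tendsto_add_atTop_iff_nat 1).2 (hlim v)).sub (hlim v)).const_mul 2
  refine tendsto_nhds_unique_of_frequently_eq h_rho h_step ?_
  refine (frequently_atTop.2 (hσ v)).mono fun t ht => ?_
  subst ht
  rw [rvec_succ, Pi.add_apply, Pi.single_eq_same]
  ring

theorem isLeast_of_tendsto_rvec :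
    IsLeast {s : V → ℝ | 0 ≤ s ∧ IsRaisingBalanced E (alphaR α s)} rstar := by
  refine ⟨⟨fun v => ge_of_tendsto' (hlim v) fun t => rvec_nonneg t v, ?_⟩, ?_⟩
  · exact isRaisingBalanced_alphaR_of_tendsto_rvec hout hin hout_fin hin_fin hσ hlim
  · rintro s ⟨hs_nonneg, hs⟩ v
    exact le_of_tendsto' (hlim v) fun t =>
      rvec_le_of_isRaisingBalanced hout hin hout_fin hin_fin hs_nonneg hs t v

end LocallyFinite

end Raising

lemma exists_fair [Countable V] [Nonempty V] : ∃ σ : ℕ → V, Fair σ := by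
  obtain ⟨f, hf⟩ := exists_surjective_nat V
  refine ⟨fun t => f t.unpair.1, fun v N => ?_⟩
  obtain ⟨n, rfl⟩ := hf v
  exact ⟨Nat.pair n N, Nat.right_le_pair n N, by simp only [Nat.unpair_pair]⟩

theorem max_height_eq_zero_general [DecidableEq V] {E : V → V → Prop}
    (hout : ∀ v, ∃ w, E v w) (hin : ∀ v, ∃ u, E u v)
    (hout_fin : ∀ v, {w | E v w}.Finite) (hin_fin : ∀ v, {u | E u v}.Finite)
    {α : V → V → ℝ} {σ : ℕ → V} (hσ : Fair σ) {rstar : V → ℝ}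
    (hlim : ∀ v, Tendsto (fun t => rvec E α σ t v) atTop (𝓝 (rstar v))) :
    IsLUB (Set.range (height rstar)) 0 ∧ IsGLB (Set.range rstar) 0 := by
  obtain ⟨⟨h_nonneg, h_bal⟩, h_least⟩ :=
    isLeast_of_tendsto_rvec hout hin hout_fin hin_fin hσ hlim
  have h_glb : IsGLB (Set.range rstar) 0 := by
    refine ⟨Set.forall_mem_range.2 h_nonneg, fun c hc => ?_⟩
    have h_shift : rstar ≤ fun v => rstar v - c :=
      h_least ⟨fun v => sub_nonneg.2 (hc ⟨v, rfl⟩), by rwa [alphaR_sub_const]⟩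
    linarith [h_shift (σ 0)]
  have h_lub : IsLUB (Set.range fun v => -rstar v) 0 := by
    simpa only [Set.neg_range, neg_zero] using h_glb.neg
  exact ⟨h_lub, h_glb⟩

/-- The maximum height is zero; equivalently `min_v r*_v = 0`. -/
theorem max_height_eq_zero
    [Fintype V] [Nonempty V] [DecidableEq V] (E : V → V → Prop)
    (hout : ∀ v, ∃ w, E v w) (hin : ∀ v, ∃ u, E u v)
    (hconn : ∀ u v : V, Relation.ReflTransGen E u v)
    (α : V → V → ℝ) (rstar : V → ℝ)
    (hrstar : ∀ σ : ℕ → V, Fair σ → ∀ v,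
      Tendsto (fun t => rvec E α σ t v) atTop (nhds (rstar v))) :
    Finset.univ.sup' Finset.univ_nonempty (height rstar) = 0 ∧
    Finset.univ.inf' Finset.univ_nonempty rstar = 0 := by
  obtain ⟨σ, hσ⟩ := exists_fair (V := V)
  obtain ⟨h_lub, h_glb⟩ := max_height_eq_zero_general hout hin (fun _ => Set.toFinite _)
    (fun _ => Set.toFinite _) hσ (hrstar σ hσ)
  exact ⟨by rw [Finset.sup'_univ_eq_ciSup, h_lub.ciSup_eq],
    by rw [Finset.inf'_univ_eq_ciInf, h_glb.ciInf_eq]⟩
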